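/- Let W ⊆ V be a subspace and s : W → ℰ a linear map with 𝐛∘s = id_W whose image is isotropic (⟨s(w), s(w')⟩ = 0 for all w, w' ∈ W). Then the subspace L = s(W) + W⁰ satisfies L = L^⊥ and 𝐛(L) = W. -/

import Mathlib

variable {V : Type*} [AddCommGroup V] [Module ℝ V] [FiniteDimensional ℝ V]

/-- The bracket of the omni-Lie algebra `ℰ = End(V) × V`:
`⦃(A,u),(B,v)⦄ = (A∘B − B∘A, A(v))`. -/
def obr (X Y : (V →ₗ[ℝ] V) × V) : (V →ₗ[ℝ] V) × V :=
  (X.1 ∘ₗ Y.1 - Y.1 ∘ₗ X.1, X.1 Y.2)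

/-- The symmetric `V`-valued pairing `⟨(A,u),(B,v)⟩ = (1/2)(A(v) + B(u))`. -/
noncomputable def opair (X Y : (V →ₗ[ℝ] V) × V) : V :=
  (1/2 : ℝ) • (X.1 Y.2 + Y.1 X.2)

/-- `S^⊥ = {X ∈ ℰ : ⟨X,l⟩ = 0 for all l ∈ S}`. -/
def perpSet (S : Set ((V →ₗ[ℝ] V) × V)) : Set ((V →ₗ[ℝ] V) × V) :=
  {X | ∀ l ∈ S, opair X l = 0}

/-- `W⁰ = {(A,0) ∈ ℰ : A(w) = 0 for all w ∈ W}`. -/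
def ann (W : Submodule ℝ V) : Submodule ℝ ((V →ₗ[ℝ] V) × V) where
  carrier := {X | X.2 = 0 ∧ ∀ w ∈ W, X.1 w = 0}
  add_mem' := by
    rintro X Y ⟨hX2, hX1⟩ ⟨hY2, hY1⟩
    exact ⟨by simp [hX2, hY2], fun w hw => by simp [hX1 w hw, hY1 w hw]⟩
  zero_mem' := ⟨rfl, fun w _ => rfl⟩
  smul_mem' := by
    rintro c X ⟨hX2, hX1⟩
    exact ⟨by simp [hX2], fun w hw => by simp [hX1 w hw]⟩

/-!
Adding `W⁰` to a subspace `P` cuts `P^⊥` down to its elements over `W`, because `(W⁰)^⊥` consists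
of the `X` with `𝐛(X) ∈ W`. So it remains to describe `s(W)^⊥` over `W`: if `𝐛(X) = w ∈ W`, then
isotropy lets us replace `X` by `X - s(w)`, and an element `(A, 0)` is orthogonal to `s(W)` exactly
when `A` vanishes on `𝐛(s(W)) = W`. Hence `X ∈ L^⊥` if and only if `X - s(w) ∈ W⁰` for some `w ∈ W`,
that is, `X ∈ L`.
-/

section LinearAlgebra

lemma mem_range_sup_iff {R M N : Type*} [Ring R] [AddCommGroup M] [AddCommGroup N]
    [Module R M] [Module R N] {f : M →ₗ[R] N} {P : Submodule R N} {x : N} :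
    x ∈ LinearMap.range f ⊔ P ↔ ∃ m, x - f m ∈ P := by
  simp only [Submodule.mem_sup, LinearMap.mem_range, exists_exists_eq_and, ← eq_sub_iff_add_eq',
    exists_eq_right]

lemma forall_end_apply_eq_zero_iff {K M : Type*} [DivisionRing K] [AddCommGroup M] [Module K M]
    {W : Submodule K M} {u : M} :
    (∀ A : M →ₗ[K] M, (∀ w ∈ W, A w = 0) → A u = 0) ↔ u ∈ W := by
  refine ⟨fun h => ?_, fun hu A hA => hA u hu⟩
  by_contra hu
  obtain ⟨f, hfu, hfW⟩ := Submodule.exists_le_ker_of_notMem hu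
  have hu_ne_zero : u ≠ 0 := fun h0 => hu (h0 ▸ W.zero_mem)
  have hA : ∀ w ∈ W, f.smulRight u w = 0 := fun w hw => by
    rw [LinearMap.smulRight_apply, LinearMap.mem_ker.1 (hfW hw), zero_smul]
  exact smul_ne_zero hfu hu_ne_zero (h (f.smulRight u) hA)

end LinearAlgebra

section OmniLie

omit [FiniteDimensional ℝ V]

lemma opair_eq_zero_iff {X Y : (V →ₗ[ℝ] V) × V} : opair X Y = 0 ↔ X.1 Y.2 + Y.1 X.2 = 0 :=
  smul_eq_zero_iff_right (by norm_num)

lemma opair_add_right (X Y Z : (V →ₗ[ℝ] V) × V) : opair X (Y + Z) = opair X Y + opair X Z := by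
  simp only [opair, Prod.fst_add, Prod.snd_add, map_add, LinearMap.add_apply]
  module

lemma opair_sub_left (X Y Z : (V →ₗ[ℝ] V) × V) : opair (X - Y) Z = opair X Z - opair Y Z := by
  simp only [opair, Prod.fst_sub, Prod.snd_sub, map_sub, LinearMap.sub_apply]
  module

lemma perpSet_anti {S T : Set ((V →ₗ[ℝ] V) × V)} (h : S ⊆ T) : perpSet T ⊆ perpSet S :=
  fun _ hX l hl => hX l (h hl)

lemma perpSet_sup (P Q : Submodule ℝ ((V →ₗ[ℝ] V) × V)) :
    perpSet (↑(P ⊔ Q) : Set ((V →ₗ[ℝ] V) × V)) = perpSet ↑P ∩ perpSet ↑Q := by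
  apply Set.Subset.antisymm
  · exact Set.subset_inter (perpSet_anti (SetLike.coe_subset_coe.2 le_sup_left))
      (perpSet_anti (SetLike.coe_subset_coe.2 le_sup_right))
  · rintro X ⟨hP, hQ⟩ l hl
    obtain ⟨p, hp, q, hq, rfl⟩ := Submodule.mem_sup.1 hl
    rw [opair_add_right, hP p hp, hQ q hq, add_zero]

lemma sub_mem_perpSet_iff {S : Set ((V →ₗ[ℝ] V) × V)} {X Y : (V →ₗ[ℝ] V) × V}
    (hY : Y ∈ perpSet S) : X - Y ∈ perpSet S ↔ X ∈ perpSet S :=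
  forall₂_congr fun l hl => by rw [opair_sub_left, hY l hl, sub_zero]

lemma perpSet_ann (W : Submodule ℝ V) :
    perpSet (ann W : Set ((V →ₗ[ℝ] V) × V)) = Prod.snd ⁻¹' (W : Set V) := by
  ext X
  calc X ∈ perpSet (ann W : Set ((V →ₗ[ℝ] V) × V))
    _ ↔ ∀ A : V →ₗ[ℝ] V, (∀ w ∈ W, A w = 0) → A X.2 = 0 := by
        simp [perpSet, ann, opair_eq_zero_iff]
    _ ↔ X.2 ∈ W := forall_end_apply_eq_zero_iff

lemma mem_ann_map_snd_iff {P : Submodule ℝ ((V →ₗ[ℝ] V) × V)} {X : (V →ₗ[ℝ] V) × V} :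
    X ∈ ann (P.map (LinearMap.snd ℝ (V →ₗ[ℝ] V) V)) ↔ X.2 = 0 ∧ X ∈ perpSet P := by
  refine and_congr_right fun hX => Set.forall_mem_image.trans (forall₂_congr fun l _ => ?_)
  rw [opair_eq_zero_iff, hX, map_zero, add_zero, LinearMap.snd_apply]

lemma map_snd_ann (W : Submodule ℝ V) : (ann W).map (LinearMap.snd ℝ (V →ₗ[ℝ] V) V) = ⊥ :=
  LinearMap.le_ker_iff_map.1 fun _ hX => hX.1

variable {W : Submodule ℝ V} {s : W →ₗ[ℝ] (V →ₗ[ℝ] V) × V}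

lemma map_snd_range_of_section (hsec : ∀ w : W, (s w).2 = (w : V)) :
    (LinearMap.range s).map (LinearMap.snd ℝ (V →ₗ[ℝ] V) V) = W := by
  have hcomp : LinearMap.snd ℝ (V →ₗ[ℝ] V) V ∘ₗ s = W.subtype := LinearMap.ext hsec
  rw [← LinearMap.range_comp, hcomp, Submodule.range_subtype]

lemma sub_section_mem_ann_iff (hsec : ∀ w : W, (s w).2 = (w : V))
    (hiso : ∀ w w' : W, opair (s w) (s w') = 0) {X : (V →ₗ[ℝ] V) × V} {w : W} :
    X - s w ∈ ann W ↔ X ∈ perpSet (LinearMap.range s) ∧ X.2 = w := by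
  have hperp : s w ∈ perpSet (LinearMap.range s : Set ((V →ₗ[ℝ] V) × V)) :=
    Set.forall_mem_range.2 (hiso w)
  calc X - s w ∈ ann W
    _ ↔ (X - s w).2 = 0 ∧ X - s w ∈ perpSet (LinearMap.range s) := by
        rw [← mem_ann_map_snd_iff, map_snd_range_of_section hsec]
    _ ↔ X ∈ perpSet (LinearMap.range s) ∧ X.2 = w := by
        rw [sub_mem_perpSet_iff hperp, Prod.snd_sub, hsec, sub_eq_zero, and_comm]

theorem isotropic_section_gives_maximal_isotropic_general (W : Submodule ℝ V)
    (s : W →ₗ[ℝ] (V →ₗ[ℝ] V) × V)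
    (hsec : ∀ w : W, (s w).2 = (w : V))
    (hiso : ∀ w w' : W, opair (s w) (s w') = 0) :
    ((LinearMap.range s ⊔ ann W : Submodule ℝ ((V →ₗ[ℝ] V) × V)) : Set ((V →ₗ[ℝ] V) × V)) =
        perpSet ((LinearMap.range s ⊔ ann W : Submodule ℝ ((V →ₗ[ℝ] V) × V)) :
          Set ((V →ₗ[ℝ] V) × V)) ∧
      (LinearMap.range s ⊔ ann W).map (LinearMap.snd ℝ (V →ₗ[ℝ] V) V) = W := by
  constructor
  · ext X
    calc X ∈ LinearMap.range s ⊔ ann W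
      _ ↔ ∃ w, X - s w ∈ ann W := mem_range_sup_iff
      _ ↔ ∃ w : W, X ∈ perpSet (LinearMap.range s) ∧ X.2 = w :=
          exists_congr fun _ => sub_section_mem_ann_iff hsec hiso
      _ ↔ X ∈ perpSet (LinearMap.range s) ∧ X.2 ∈ W := by simp
      _ ↔ X ∈ perpSet (LinearMap.range s ⊔ ann W : Submodule ℝ ((V →ₗ[ℝ] V) × V)) := by
          rw [perpSet_sup, perpSet_ann, Set.mem_inter_iff, Set.mem_preimage, SetLike.mem_coe]
  · rw [Submodule.map_sup, map_snd_range_of_section hsec, map_snd_ann, sup_bot_eq]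

end OmniLie

/-- Given an isotropic linear section `s : W → ℰ` with `𝐛 ∘ s = id`, the subspace
`L = s(W) + W⁰` satisfies `L = L^⊥` and `𝐛(L) = W`. -/
theorem isotropic_section_gives_maximal_isotropic (W : Submodule ℝ V)
    (s : W →ₗ[ℝ] (V →ₗ[ℝ] V) × V)
    (hsec : ∀ w : W, (s w).2 = (w : V))
    (hiso : ∀ w w' : W, opair (s w) (s w') = 0) :
    ((LinearMap.range s ⊔ ann W : Submodule ℝ ((V →ₗ[ℝ] V) × V)) : Set ((V →ₗ[ℝ] V) × V)) =
        perpSet ((LinearMap.range s ⊔ ann W : Submodule ℝ ((V →ₗ[ℝ] V) × V)) :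
          Set ((V →ₗ[ℝ] V) × V)) ∧
      (LinearMap.range s ⊔ ann W).map (LinearMap.snd ℝ (V →ₗ[ℝ] V) V) = W :=
  isotropic_section_gives_maximal_isotropic_general W s hsec hiso
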